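/- arXiv:2002.03142 — 2 statements merged into one kernel-verified Lean document; each statement's English description precedes it below -/
import Mathlib

section
/- (KKT rank inequality, general step of Theorem 2.) Let X, Y ∈ ℂ^{n×n} be Hermitian positive semidefinite with X Y = 0. Let h₁, h₂, h₃, h₄ ∈ ℂⁿ, let H₁, H₂, H₃, H₄ be complex matrices with n rows, and let m ≥ 0, ν ≥ 0, n' ≥ 0, μ ≥ 0, ρ₁ ≥ 0, P_S ≥ 0, P_J ≥ 0, ω > 0, σ_R² > 0 be real scalars satisfying the stationarity identity (1+m) h₁h₁† − μ ρ₁ H₁H₁† + ν h₂h₂† + n'(P_S h₃h₃† + P_J h₄h₄† + σ_R² H₄H₄†) − ω(P_S H₂H₂† + P_J H₃H₃† + σ_R² I) + Y = 0. Then rank(X) ≤ rank((1+m) h₁h₁† + ν h₂h₂† + n'(P_S h₃h₃† + P_J h₄h₄† + σ_R² H₄H₄†)). -/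
open Matrix ComplexOrder

/-!
Write `A` for the matrix whose rank is the upper bound. Stationarity reads `A + Y = D`, where
`D = μρ₁ H₁H₁ᴴ + ω(P_S H₂H₂ᴴ + P_J H₃H₃ᴴ + σ_R² I)` is positive definite because of its identity
term. As `X * Y = 0`, it follows that `X * A = X * D`, and multiplying by the invertible `D`
preserves rank, so `rank X = rank (X * A) ≤ rank A`.
-/

theorem rank_le_rank_of_mul_eq_zero_of_isUnit_add {R l n : Type*} [CommRing R]
    [Fintype n] [DecidableEq n] {X : Matrix l n R} {A Y : Matrix n n R}
    (hXY : X * Y = 0) (hAY : IsUnit (A + Y)) : X.rank ≤ A.rank := by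
  nontriviality R
  have hXA : X * (A + Y) = X * A := by rw [Matrix.mul_add, hXY, add_zero]
  calc
    X.rank = (X * (A + Y)).rank :=
      (rank_mul_eq_left_of_isUnit_det _ X ((isUnit_iff_isUnit_det _).1 hAY)).symm
    _ = (X * A).rank := by rw [hXA]
    _ ≤ A.rank := rank_mul_le_right X A

theorem posDef_add_smul_add_smul_one {R n : Type*} [CommRing R] [IsDomain R]
    [PartialOrder R] [StarRing R] [StarOrderedRing R] [DecidableEq n] {P Q : Matrix n n R}
    (hP : P.PosSemidef) (hQ : Q.PosSemidef) {ω σ : R} (hω : 0 < ω) (hσ : 0 < σ) :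
    (P + ω • (Q + σ • (1 : Matrix n n R))).PosDef :=
  .posSemidef_add hP (.smul (.posSemidef_add hQ (.smul .one hσ)) hω)

theorem posSemidef_smul_self_mul_conjTranspose {R n m : Type*} [CommRing R]
    [PartialOrder R] [StarRing R] [StarOrderedRing R] [Finite n] [Fintype m]
    {c : R} (hc : 0 ≤ c) (H : Matrix n m R) : (c • (H * Hᴴ)).PosSemidef :=
  (posSemidef_self_mul_conjTranspose H).smul hc

theorem statement12_general {K l n m₁ m₂ m₃ : Type*} [Field K] [PartialOrder K]
    [StarRing K] [StarOrderedRing K] [Fintype n] [DecidableEq n]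
    [Fintype m₁] [Fintype m₂] [Fintype m₃] {X : Matrix l n K} {A Y : Matrix n n K}
    (hXY : X * Y = 0) (H₁ : Matrix n m₁ K) (H₂ : Matrix n m₂ K) (H₃ : Matrix n m₃ K)
    {κ PS PJ ω σR2 : K} (hκ : 0 ≤ κ) (hPS : 0 ≤ PS) (hPJ : 0 ≤ PJ) (hω : 0 < ω) (hσR : 0 < σR2)
    (hstat : A - κ • (H₁ * H₁ᴴ)
      - ω • (PS • (H₂ * H₂ᴴ) + PJ • (H₃ * H₃ᴴ) + σR2 • (1 : Matrix n n K)) + Y = 0) :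
    X.rank ≤ A.rank := by
  have hAY : A + Y = κ • (H₁ * H₁ᴴ)
      + ω • (PS • (H₂ * H₂ᴴ) + PJ • (H₃ * H₃ᴴ) + σR2 • (1 : Matrix n n K)) := by
    rw [← sub_eq_zero, ← hstat]
    abel
  have hposDef : (A + Y).PosDef := hAY ▸ posDef_add_smul_add_smul_one
    (posSemidef_smul_self_mul_conjTranspose hκ H₁)
    ((posSemidef_smul_self_mul_conjTranspose hPS H₂).add
      (posSemidef_smul_self_mul_conjTranspose hPJ H₃)) hω hσR
  exact rank_le_rank_of_mul_eq_zero_of_isUnit_add hXY hposDef.isUnit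

/-- KKT rank inequality, general step of Theorem 2: Let
`X, Y ∈ ℂ^{n×n}` be Hermitian positive semidefinite with `X Y = 0`.  Let
`h₁, h₂, h₃, h₄ ∈ ℂⁿ`, let `H₁, H₂, H₃, H₄` be complex matrices with `n` rows,
and let `m ≥ 0, ν ≥ 0, n' ≥ 0, μ ≥ 0, ρ₁ ≥ 0, P_S ≥ 0, P_J ≥ 0, ω > 0, σ_R² > 0`
be real scalars satisfying the stationarity identity
`(1+m) h₁h₁ᴴ − μρ₁ H₁H₁ᴴ + ν h₂h₂ᴴ + n'(P_S h₃h₃ᴴ + P_J h₄h₄ᴴ + σ_R² H₄H₄ᴴ)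
 − ω(P_S H₂H₂ᴴ + P_J H₃H₃ᴴ + σ_R² I) + Y = 0`.
Then `rank X ≤ rank((1+m) h₁h₁ᴴ + ν h₂h₂ᴴ + n'(P_S h₃h₃ᴴ + P_J h₄h₄ᴴ + σ_R² H₄H₄ᴴ))`.
Outer products `h hᴴ` are written `vecMulVec h (star h)`. -/
theorem statement12 (n m₁ m₂ m₃ m₄ : ℕ)
    (X Y : Matrix (Fin n) (Fin n) ℂ)
    (hX : X.PosSemidef) (hY : Y.PosSemidef) (hXY : X * Y = 0)
    (h₁ h₂ h₃ h₄ : Fin n → ℂ)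
    (H₁ : Matrix (Fin n) (Fin m₁) ℂ) (H₂ : Matrix (Fin n) (Fin m₂) ℂ)
    (H₃ : Matrix (Fin n) (Fin m₃) ℂ) (H₄ : Matrix (Fin n) (Fin m₄) ℂ)
    (m ν n' μ ρ₁ PS PJ ω σR2 : ℝ)
    (hm : 0 ≤ m) (hν : 0 ≤ ν) (hn' : 0 ≤ n') (hμ : 0 ≤ μ) (hρ₁ : 0 ≤ ρ₁)
    (hPS : 0 ≤ PS) (hPJ : 0 ≤ PJ) (hω : 0 < ω) (hσR : 0 < σR2)
    (hstat :
      ((1 + m : ℝ) : ℂ) • vecMulVec h₁ (star h₁)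
        - ((μ * ρ₁ : ℝ) : ℂ) • (H₁ * H₁ᴴ)
        + (ν : ℂ) • vecMulVec h₂ (star h₂)
        + (n' : ℂ) • ((PS : ℂ) • vecMulVec h₃ (star h₃)
            + (PJ : ℂ) • vecMulVec h₄ (star h₄) + (σR2 : ℂ) • (H₄ * H₄ᴴ))
        - (ω : ℂ) • ((PS : ℂ) • (H₂ * H₂ᴴ) + (PJ : ℂ) • (H₃ * H₃ᴴ)
            + (σR2 : ℂ) • (1 : Matrix (Fin n) (Fin n) ℂ))
        + Y = 0) :
    X.rank ≤
      (((1 + m : ℝ) : ℂ) • vecMulVec h₁ (star h₁)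
        + (ν : ℂ) • vecMulVec h₂ (star h₂)
        + (n' : ℂ) • ((PS : ℂ) • vecMulVec h₃ (star h₃)
            + (PJ : ℂ) • vecMulVec h₄ (star h₄)
            + (σR2 : ℂ) • (H₄ * H₄ᴴ))).rank := by
  have hμρ₁ : 0 ≤ μ * ρ₁ := mul_nonneg hμ hρ₁
  exact statement12_general hXY H₁ H₂ H₃ (Complex.zero_le_real.2 hμρ₁) (Complex.zero_le_real.2 hPS)
    (Complex.zero_le_real.2 hPJ) (Complex.zero_lt_real.2 hω) (Complex.zero_lt_real.2 hσR)
    (by rw [← hstat]; abel)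
end

section
/- (Core of Theorem 2: rank-one optimality of the SDP relaxation.) Let X, Y ∈ ℂ^{n×n} be Hermitian positive semidefinite with X Y = 0. Let h₁ ∈ ℂⁿ, let H₁, H₂, H₃ be complex matrices with n rows, and let m ≥ 0, μ ≥ 0, ρ₁ ≥ 0, P_S ≥ 0, P_J ≥ 0, ω > 0, σ_R² > 0 be real scalars satisfying the stationarity identity (1+m) h₁h₁† − μ ρ₁ H₁H₁† − ω(P_S H₂H₂† + P_J H₃H₃† + σ_R² I) + Y = 0. Then rank(X) ≤ 1. -/
open Matrix ComplexOrder

/-! Complementary slackness says that `X` annihilates `Y` from the left, so multiplying the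
stationarity identity by `X` eliminates the dual slack and leaves `X * N = (1 + m) • (X * h₁h₁ᴴ)`,
where `N` is the sum of the matrices that enter the identity with a minus sign. The noise term makes
`N` positive definite, hence invertible, so `rank X = rank (X * N) ≤ rank (h₁h₁ᴴ) ≤ 1`. -/

section Rank

variable {l n o R : Type*} [Fintype n]

lemma mul_eq_mul_of_sub_add_eq_zero [NonUnitalRing R] {X : Matrix l n R} {A N Y : Matrix n o R}
    (hXY : X * Y = 0) (h : A - N + Y = 0) : X * N = X * A := by
  have hN : N = A + Y := by rw [← sub_eq_zero, ← neg_eq_zero, ← h]; abel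
  rw [hN, Matrix.mul_add, hXY, add_zero]

lemma rank_le_rank_of_mul_eq_mul [Fintype o] [DecidableEq n] [CommRing R] [Nontrivial R]
    {X : Matrix l n R} {N : Matrix n n R} {Z : Matrix l o R} {A : Matrix o n R}
    (hN : N.det ∈ nonZeroDivisors R) (h : X * N = Z * A) : X.rank ≤ A.rank :=
  calc
    X.rank = (X * N).rank := (rank_mul_eq_left_of_det_mem_nonZeroDivisors N X hN).symm
    _ = (Z * A).rank := by rw [h]
    _ ≤ A.rank := rank_mul_le_right Z A

lemma rank_smul_vecMulVec_le_one [CommSemiring R] [StrongRankCondition R] (a : R) (u : l → R)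
    (v : n → R) : (a • vecMulVec u v).rank ≤ 1 := by
  rw [← smul_vecMulVec]
  exact rank_vecMulVec_le (a • u) v

end Rank

lemma posDef_add_smul_one {n K : Type*} [DecidableEq n] [Field K] [PartialOrder K] [StarRing K]
    [StarOrderedRing K] {A : Matrix n n K} (hA : A.PosSemidef) {c : K} (hc : 0 < c) :
    (A + c • (1 : Matrix n n K)).PosDef :=
  PosDef.posSemidef_add hA (PosDef.one.smul hc)

theorem statement13_general {l n p₁ p₂ p₃ K : Type*} [Fintype n] [DecidableEq n] [Fintype p₁]
    [Fintype p₂] [Fintype p₃] [Field K] [PartialOrder K] [StarRing K] [StarOrderedRing K]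
    {X : Matrix l n K} {Y : Matrix n n K} (hXY : X * Y = 0)
    {h₁ : n → K} {H₁ : Matrix n p₁ K} {H₂ : Matrix n p₂ K} {H₃ : Matrix n p₃ K}
    {a b PS PJ ω σR2 : K} (hb : 0 ≤ b) (hPS : 0 ≤ PS) (hPJ : 0 ≤ PJ) (hω : 0 < ω) (hσR : 0 < σR2)
    (hstat : a • vecMulVec h₁ (star h₁) - b • (H₁ * H₁ᴴ)
      - ω • (PS • (H₂ * H₂ᴴ) + PJ • (H₃ * H₃ᴴ) + σR2 • (1 : Matrix n n K)) + Y = 0) :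
    X.rank ≤ 1 := by
  have hnoise : (PS • (H₂ * H₂ᴴ) + PJ • (H₃ * H₃ᴴ) + σR2 • (1 : Matrix n n K)).PosDef :=
    posDef_add_smul_one (((posSemidef_self_mul_conjTranspose H₂).smul hPS).add
      ((posSemidef_self_mul_conjTranspose H₃).smul hPJ)) hσR
  have hN := PosDef.posSemidef_add ((posSemidef_self_mul_conjTranspose H₁).smul hb)
    (hnoise.smul hω)
  have hdet := ((isUnit_iff_isUnit_det _).mp hN.isUnit).mem_nonZeroDivisors
  rw [sub_sub] at hstat
  have hmul := mul_eq_mul_of_sub_add_eq_zero hXY hstat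
  exact (rank_le_rank_of_mul_eq_mul hdet hmul).trans
    (rank_smul_vecMulVec_le_one a h₁ (star h₁))

/-- Core of Theorem 2: rank-one optimality of the SDP relaxation:
Let `X, Y ∈ ℂ^{n×n}` be Hermitian positive semidefinite with `X Y = 0`.  Let
`h₁ ∈ ℂⁿ`, let `H₁, H₂, H₃` be complex matrices with `n` rows, and let
`m ≥ 0, μ ≥ 0, ρ₁ ≥ 0, P_S ≥ 0, P_J ≥ 0, ω > 0, σ_R² > 0` be real scalars
satisfying the stationarity identity
`(1+m) h₁h₁ᴴ − μρ₁ H₁H₁ᴴ − ω(P_S H₂H₂ᴴ + P_J H₃H₃ᴴ + σ_R² I) + Y = 0`.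
Then `rank X ≤ 1`. -/
theorem statement13 (n m₁ m₂ m₃ : ℕ)
    (X Y : Matrix (Fin n) (Fin n) ℂ)
    (hX : X.PosSemidef) (hY : Y.PosSemidef) (hXY : X * Y = 0)
    (h₁ : Fin n → ℂ)
    (H₁ : Matrix (Fin n) (Fin m₁) ℂ) (H₂ : Matrix (Fin n) (Fin m₂) ℂ)
    (H₃ : Matrix (Fin n) (Fin m₃) ℂ)
    (m μ ρ₁ PS PJ ω σR2 : ℝ)
    (hm : 0 ≤ m) (hμ : 0 ≤ μ) (hρ₁ : 0 ≤ ρ₁)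
    (hPS : 0 ≤ PS) (hPJ : 0 ≤ PJ) (hω : 0 < ω) (hσR : 0 < σR2)
    (hstat :
      ((1 + m : ℝ) : ℂ) • vecMulVec h₁ (star h₁)
        - ((μ * ρ₁ : ℝ) : ℂ) • (H₁ * H₁ᴴ)
        - (ω : ℂ) • ((PS : ℂ) • (H₂ * H₂ᴴ) + (PJ : ℂ) • (H₃ * H₃ᴴ)
            + (σR2 : ℂ) • (1 : Matrix (Fin n) (Fin n) ℂ))
        + Y = 0) :
    X.rank ≤ 1 :=
  statement13_general hXY (mod_cast mul_nonneg hμ hρ₁) (mod_cast hPS) (mod_cast hPJ)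
    (mod_cast hω) (mod_cast hσR) hstat
end
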